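/- Let X ⊆ Y be nonempty finite sets of jobs (with sizes in (0, g(m)]). Then for every job J ∈ X, r̃(X)(J) ≥ r̃(Y)(J); that is, the cost charged to each job is non-increasing as the job set expands. -/

import Mathlib

open scoped Classical
open Finset MeasureTheory

namespace BSHM

noncomputable section

/-- The set of candidate parents of machine type `i`: types `j ∈ M` with `j > i`
and a strictly smaller normalized cost rate per capacity unit. -/
def pset (m : ℕ) (g r : ℕ → ℝ) (i : ℕ) : Set ℕ :=
  {j | j ≤ m ∧ i < j ∧ r j / g j < r i / g i}

/-- The parent `p i` of machine type `i` (equal to `0` when the parent is undefined,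
since any actual parent has index `≥ 2`). -/
def p (m : ℕ) (g r : ℕ → ℝ) (i : ℕ) : ℕ := sInf (pset m g r i)

/-- `pdef i` asserts that the parent of `i` is defined. -/
def pdef (m : ℕ) (g r : ℕ → ℝ) (i : ℕ) : Prop := (pset m g r i).Nonempty

/-- One step of the parent relation: `b` is the (defined) parent of `a`. -/
def pstep (m : ℕ) (g r : ℕ → ℝ) (a b : ℕ) : Prop :=
  pdef m g r a ∧ b = p m g r a

/-- `P i`: the set consisting of `i` together with all of its iterated parents. -/
def P (m : ℕ) (g r : ℕ → ℝ) (i : ℕ) : Set ℕ :=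
  {z | Relation.ReflTransGen (pstep m g r) i z}

/-- `A i`: the set of nodes in the tree rooted at `i`,
i.e. all `z ∈ M` having `i` as an ancestor (or equal to `i`). -/
def A (m : ℕ) (g r : ℕ → ℝ) (i : ℕ) : Set ℕ :=
  {z | 1 ≤ z ∧ z ≤ m ∧ i ∈ P m g r z}

/-- `v i`: the lowest-indexed node in the tree rooted at `i`. -/
def v (m : ℕ) (g r : ℕ → ℝ) (i : ℕ) : ℕ := sInf (A m g r i)

/-- `y i`: the younger siblings of `i` (same parent status, smaller index). -/
def y (m : ℕ) (g r : ℕ → ℝ) (i : ℕ) : Set ℕ :=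
  {z | 1 ≤ z ∧ z ≤ m ∧ z < i ∧ p m g r z = p m g r i}

/-- `esib i`: the elder siblings of `i`. -/
def esib (m : ℕ) (g r : ℕ → ℝ) (i : ℕ) : Set ℕ :=
  {z | 1 ≤ z ∧ z ≤ m ∧ i < z ∧ p m g r z = p m g r i}

/-- `T k := {k} ∪ ⋃_{z ∈ P(k)} y(z)`. -/
def T (m : ℕ) (g r : ℕ → ℝ) (k : ℕ) : Set ℕ :=
  {k} ∪ ⋃ z ∈ P m g r k, y m g r z

/-- `T k` as a `Finset` (all relevant nodes lie in `{k} ∪ [1, m]`). -/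
def TIcc (m : ℕ) (g r : ℕ → ℝ) (k : ℕ) : Finset ℕ :=
  (insert k (Finset.Icc 1 m)).filter (fun z => z ∈ T m g r k)

/-! ### Jobs and one-shot scheduling -/

variable {ι : Type*}

/-- The exact machine type of a job `J`: the least `z ∈ M` with `s J ≤ g z`. -/
def mty (m : ℕ) (g : ℕ → ℝ) (s : ι → ℝ) (J : ι) : ℕ :=
  sInf {z | 1 ≤ z ∧ z ≤ m ∧ s J ≤ g z}

/-- Total size of a finite set of jobs. -/
def Ssum (s : ι → ℝ) (W : Finset ι) : ℝ := ∑ J ∈ W, s J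

/-- `k0f X`: the highest-indexed exact machine type among the jobs of `X`. -/
def k0f (m : ℕ) (g : ℕ → ℝ) (s : ι → ℝ) (X : Finset ι) : ℕ :=
  X.sup (fun J => mty m g s J)

/-- `H z X`: the jobs of `X` whose exact machine type lies in the tree rooted at `z`. -/
def H (m : ℕ) (g r : ℕ → ℝ) (s : ι → ℝ) (z : ℕ) (X : Finset ι) : Finset ι :=
  X.filter (fun J => mty m g s J ∈ A m g r z)

/-- `SH X z := S(H_z(X))`. -/
def SH (m : ℕ) (g r : ℕ → ℝ) (s : ι → ℝ) (X : Finset ι) (z : ℕ) : ℝ :=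
  Ssum s (H m g r s z X)

/-- Feasibility of a machine configuration `w : M → ℕ` for the job set `X`. -/
def Feasible (m : ℕ) (g : ℕ → ℝ) (s : ι → ℝ) (X : Finset ι) (w : ℕ → ℕ) : Prop :=
  ∀ i, 1 ≤ i → i ≤ m →
    Ssum s (X.filter (fun J => i ≤ mty m g s J)) ≤ ∑ z ∈ Finset.Icc i m, (w z : ℝ) * g z

/-- The cost of a machine configuration. -/
def cost (m : ℕ) (r : ℕ → ℝ) (w : ℕ → ℕ) : ℝ :=
  ∑ z ∈ Finset.Icc 1 m, (w z : ℝ) * r z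

/-- The optimal one-shot scheduling cost for a job set `X`. -/
def OPT1 (m : ℕ) (g r : ℕ → ℝ) (s : ι → ℝ) (X : Finset ι) : ℝ :=
  sInf {c : ℝ | ∃ w : ℕ → ℕ, Feasible m g s X w ∧ c = cost m r w}

/-- The fractional machine configuration `cn_{z*}` for the job set `X`, with
highest-indexed machine type `zs`.  A node `i ∈ T(zs) \ {zs}` is the boundary
type `i*` exactly when `∑_{z ∈ T(zs), z > i} S(H_z) ≤ cn(zs)·g(zs) <
∑_{z ∈ T(zs), z ≥ i} S(H_z)`; nodes above the boundary get `0`,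
nodes below it get `S(H_i)/g_i`. -/
def cn (m : ℕ) (g r : ℕ → ℝ) (s : ι → ℝ) (X : Finset ι) (zs i : ℕ) : ℝ :=
  let B : ℝ := (⌈SH m g r s X zs / g zs⌉₊ : ℝ) * g zs
  let Sge : ℝ := ∑ z ∈ (TIcc m g r zs).filter (fun z => i ≤ z), SH m g r s X z
  let Sgt : ℝ := ∑ z ∈ (TIcc m g r zs).filter (fun z => i < z), SH m g r s X z
  if i = zs then (⌈SH m g r s X zs / g zs⌉₊ : ℝ)
  else if i ∈ T m g r zs then
    (if Sgt ≤ B ∧ B < Sge then (Sge - B) / g i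
     else if B < Sgt then SH m g r s X i / g i
     else 0)
  else 0

/-- `cn_{zs}` is decent: for every strict ancestor `zt` of `zs`, the total cost of
the machines of types in `T(zs) ∩ A(zt)` is at most the cost of one type-`zt` machine. -/
def decent (m : ℕ) (g r : ℕ → ℝ) (s : ι → ℝ) (X : Finset ι) (zs : ℕ) : Prop :=
  ∀ zt ∈ P m g r zs, zt ≠ zs →
    (∑ z ∈ (TIcc m g r zs).filter (fun z => z ∈ A m g r zt), cn m g r s X zs z * r z) ≤ r zt

/-- `z⋄(X)`: the least `z* ∈ P(k0(X))` such that `cn_{z*}` is decent. -/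
def zdia (m : ℕ) (g r : ℕ → ℝ) (s : ι → ℝ) (X : Finset ι) : ℕ :=
  sInf {zs | zs ∈ P m g r (k0f m g s X) ∧ decent m g r s X zs}

/-- The child of `zd` whose subtree contains node `k`. -/
def chil (m : ℕ) (g r : ℕ → ℝ) (zd k : ℕ) : ℕ :=
  sInf {i | p m g r i = zd ∧ k ∈ A m g r i}

/-- The node `i ∈ T(zd)` whose subtree contains node `k`. -/
def idxT (m : ℕ) (g r : ℕ → ℝ) (zd k : ℕ) : ℕ :=
  sInf {i | i ∈ T m g r zd ∧ k ∈ A m g r i}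

/-- The children `f(zd)` of node `zd`, as a `Finset`. -/
def fchFin (m : ℕ) (g r : ℕ → ℝ) (zd : ℕ) : Finset ℕ :=
  (Finset.Icc 1 m).filter (fun z => p m g r z = zd)

/-- The cost `r̃(X)(J)` charged to the job `J` of the job set `X`. -/
def charge (m : ℕ) (g r : ℕ → ℝ) (s : ι → ℝ) (X : Finset ι) (J : ι) : ℝ :=
  let zd := zdia m g r s X
  let ρ : ℕ → ℝ := fun i => r i / g i
  let Hh := X.filter (fun J' => mty m g s J' = zd)
  let c : ℝ := Ssum s Hh * ρ zd + ∑ i ∈ fchFin m g r zd, SH m g r s X i * ρ i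
  if mty m g s J ∈ A m g r zd then
    if g zd ≤ SH m g r s X zd then s J * ρ zd
    else if r zd < c then
      if mty m g s J = zd then s J * ρ zd
      else
        s J * (ρ (chil m g r zd (mty m g s J)) -
          (ρ (chil m g r zd (mty m g s J)) - ρ zd) *
            ((c - r zd) /
              (∑ i ∈ fchFin m g r zd, ∑ J' ∈ H m g r s i X, s J' * (ρ i - ρ zd))))
    else
      if mty m g s J = zd then s J * ρ zd * (1 + (r zd - c) / (Ssum s Hh * ρ zd))
      else s J * ρ (chil m g r zd (mty m g s J))
  else s J * ρ (idxT m g r zd (mty m g s J))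

end

end BSHM

namespace BSHM


section Forest

variable {m : ℕ} {g r : ℕ → ℝ}

lemma p_mem_pset {i : ℕ} (h : pdef m g r i) : p m g r i ∈ pset m g r i := Nat.sInf_mem h

lemma p_le {i j : ℕ} (hj : j ∈ pset m g r i) : p m g r i ≤ j := Nat.sInf_le hj

lemma pdef_of_p_pos {i : ℕ} (h : 0 < p m g r i) : pdef m g r i := Nat.nonempty_of_pos_sInf h

lemma p_eq_zero {i : ℕ} (h : ¬ pdef m g r i) : p m g r i = 0 := by
  rw [pdef, Set.not_nonempty_iff_eq_empty] at h
  rw [p, h, Nat.sInf_empty]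

/-- The iterated parents of `k` are the strict records of the ratio `r / g` to the right of `k`. -/
lemma mem_P_iff {k i : ℕ} (hk : k ≤ m) :
    i ∈ P m g r k ↔ k ≤ i ∧ i ≤ m ∧ ∀ w, k ≤ w → w < i → r i / g i < r w / g w := by
  constructor
  · intro h
    change Relation.ReflTransGen (pstep m g r) k i at h
    induction h with
    | refl => exact ⟨le_rfl, hk, fun w h1 h2 => absurd h1 (not_le.2 h2)⟩
    | @tail i b _ hib ih =>
      obtain ⟨hki, him, hrec⟩ := ih
      obtain ⟨hdef, rfl⟩ := hib
      obtain ⟨hbm, hib, hlt⟩ := p_mem_pset hdef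
      refine ⟨by omega, hbm, fun w hw1 hw2 => ?_⟩
      rcases lt_trichotomy w i with h | rfl | h
      · exact hlt.trans (hrec w hw1 h)
      · exact hlt
      · by_contra! hcon
        have := p_le (show w ∈ pset m g r i from ⟨by omega, h, hcon.trans_lt hlt⟩)
        omega
  · rintro ⟨hki, him, hrec⟩
    change Relation.ReflTransGen (pstep m g r) k i
    induction hn : i - k using Nat.strong_induction_on generalizing k with
    | _ n ih =>
      rcases hki.eq_or_lt with rfl | hlt
      · exact Relation.ReflTransGen.refl
      · have hmem : i ∈ pset m g r k := ⟨him, hlt, hrec k le_rfl hlt⟩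
        have hdef : pdef m g r k := ⟨i, hmem⟩
        obtain ⟨h1, h2, -⟩ := p_mem_pset hdef
        have h3 := p_le hmem
        exact Relation.ReflTransGen.head ⟨hdef, rfl⟩
          (ih (i - p m g r k) (by omega) h1 h3 (fun w hw1 hw2 => hrec w (by omega) hw2) rfl)

lemma ratio_le_of_mem_P {k i j : ℕ} (hk : k ≤ m) (hi : i ∈ P m g r k) (hj : j ∈ P m g r k)
    (hij : i ≤ j) : r j / g j ≤ r i / g i := by
  rcases hij.eq_or_lt with rfl | h
  · exact le_rfl
  · exact (((mem_P_iff hk).1 hj).2.2 i ((mem_P_iff hk).1 hi).1 h).le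

lemma P_trans {k i j : ℕ} (hi : i ∈ P m g r k) (hj : j ∈ P m g r i) : j ∈ P m g r k :=
  Relation.ReflTransGen.trans hi hj

lemma P_of_mem_of_le {k i j : ℕ} (hk : k ≤ m) (hj : j ∈ P m g r k) (hki : k ≤ i) (hij : i ≤ j) :
    j ∈ P m g r i := by
  obtain ⟨-, h2, h3⟩ := (mem_P_iff hk).1 hj
  exact (mem_P_iff (hij.trans h2)).2 ⟨hij, h2, fun w hw => h3 w (hki.trans hw)⟩

lemma mem_T_of_ratio_le {k i : ℕ} (hi : 1 ≤ i) (hik : i ≤ k) (hk : k ≤ m)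
    (h : ∀ w, i < w → w ≤ k → r i / g i ≤ r w / g w) : i ∈ T m g r k := by
  rcases hik.eq_or_lt with rfl | hlt
  · exact Or.inl rfl
  right
  simp only [Set.mem_iUnion]
  induction hn : m - k using Nat.strong_induction_on generalizing k with
  | _ n ih =>
    have hself : k ∈ P m g r k := Relation.ReflTransGen.refl
    by_cases hdef : pdef m g r k
    · obtain ⟨hbm, hkb, hblt⟩ := p_mem_pset hdef
      have hmid : ∀ w, i < w → w < p m g r k → r i / g i ≤ r w / g w := by
        intro w hw1 hw2
        by_cases hwk : w ≤ k
        · exact h w hw1 hwk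
        · have hkw : r k / g k ≤ r w / g w := by
            by_contra! hcon
            have := p_le (show w ∈ pset m g r k from ⟨by omega, by omega, hcon⟩)
            omega
          exact (h k hlt le_rfl).trans hkw
      by_cases hb : r (p m g r k) / g (p m g r k) < r i / g i
      · have hmem : p m g r k ∈ pset m g r i := ⟨hbm, by omega, hb⟩
        have h1 := p_le hmem
        obtain ⟨-, h2, h3⟩ := p_mem_pset (show pdef m g r i from ⟨_, hmem⟩)
        have h4 : ¬ p m g r i < p m g r k := fun hc => absurd h3 (not_lt.2 (hmid _ h2 hc))
        exact ⟨k, hself, hi, by omega, hlt, by omega⟩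
      · obtain ⟨z, hz, hy⟩ := ih (m - p m g r k) (by omega) (k := p m g r k) (by omega) hbm
          (fun w hw1 hw2 => by
            rcases hw2.eq_or_lt with rfl | hw
            · exact not_lt.1 hb
            · exact hmid w hw1 hw) (by omega) rfl
        exact ⟨z, Relation.ReflTransGen.head ⟨hdef, rfl⟩ hz, hy⟩
    · have hdefi : ¬ pdef m g r i := by
        rintro ⟨w, hwm, hiw, hw⟩
        by_cases hwk : w ≤ k
        · exact absurd hw (not_lt.2 (h w hiw hwk))
        · exact hdef ⟨w, hwm, by omega, hw.trans_le (h k hlt le_rfl)⟩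
      exact ⟨k, hself, hi, by omega, hlt, by rw [p_eq_zero hdef, p_eq_zero hdefi]⟩

/-- `T k` consists of the weak suffix minima of the ratio `r / g` on `[1, k]`. -/
lemma mem_T_iff {k i : ℕ} (hk1 : 1 ≤ k) (hk : k ≤ m) :
    i ∈ T m g r k ↔ 1 ≤ i ∧ i ≤ k ∧ ∀ w, i < w → w ≤ k → r i / g i ≤ r w / g w := by
  refine ⟨?_, fun ⟨h1, h2, h3⟩ => mem_T_of_ratio_le h1 h2 hk h3⟩
  rintro (rfl | h)
  · exact ⟨hk1, le_rfl, fun w h1 h2 => absurd h1 (not_lt.2 h2)⟩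
  simp only [Set.mem_iUnion] at h
  obtain ⟨z, hz, hi1, him, hiz, hpp⟩ := h
  obtain ⟨hkz, hzm, hrec⟩ := (mem_P_iff hk).1 hz
  have key : ∀ w, i < w → w ≤ z → ¬ r w / g w < r i / g i := by
    intro w hiw hwz hlt
    have hmem : w ∈ pset m g r i := ⟨by omega, hiw, hlt⟩
    have h1 := p_le hmem
    obtain ⟨-, h2, -⟩ := p_mem_pset (show pdef m g r i from ⟨_, hmem⟩)
    obtain ⟨-, h3, -⟩ := p_mem_pset (pdef_of_p_pos (show 0 < p m g r z by omega))
    omega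
  refine ⟨hi1, ?_, fun w h1 h2 => not_lt.1 (key w h1 (h2.trans hkz))⟩
  by_contra! hki
  exact key z hiz le_rfl (hrec i hki.le hiz)

/-- Every `k ≤ n` has an ancestor in `T n`. -/
lemma exists_mem_P_mem_T {k n : ℕ} (hk : 1 ≤ k) (hkn : k ≤ n) (hn : n ≤ m) :
    ∃ i, i ∈ P m g r k ∧ i ∈ T m g r n := by
  induction hd : n - k using Nat.strong_induction_on generalizing k with
  | _ d ih =>
    by_cases h : ∀ w, k < w → w ≤ n → r k / g k ≤ r w / g w
    · exact ⟨k, Relation.ReflTransGen.refl, mem_T_of_ratio_le hk hkn hn h⟩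
    · push Not at h
      obtain ⟨w, hkw, hwn, hlt⟩ := h
      have hmem : w ∈ pset m g r k := ⟨by omega, hkw, hlt⟩
      have hdef : pdef m g r k := ⟨w, hmem⟩
      have h1 := p_le hmem
      obtain ⟨-, h2, -⟩ := p_mem_pset hdef
      obtain ⟨i, hi, hiT⟩ := ih (n - p m g r k) (by omega) (by omega) (by omega) rfl
      exact ⟨i, Relation.ReflTransGen.head ⟨hdef, rfl⟩ hi, hiT⟩

lemma le_of_mem_P_of_mem_T {k n i j : ℕ} (hn1 : 1 ≤ n) (hk : k ≤ m) (hn : n ≤ m)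
    (hi : i ∈ P m g r k) (hiT : i ∈ T m g r n) (hj : j ∈ P m g r k) (hjn : j ≤ n) : j ≤ i := by
  by_contra! hij
  have h1 := ((mem_P_iff hk).1 hj).2.2 i ((mem_P_iff hk).1 hi).1 hij
  exact absurd h1 (not_lt.2 (((mem_T_iff hn1 hn).1 hiT).2.2 j hij hjn))

lemma le_of_mem_P_of_p_eq {k z i j : ℕ} (hk : k ≤ m) (hi : i ∈ P m g r k) (hpi : p m g r i = z)
    (hj : j ∈ P m g r k) (hjz : j < z) : j ≤ i := by
  by_contra! hij
  obtain ⟨-, hjm, hrec⟩ := (mem_P_iff hk).1 hj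
  have := p_le (show j ∈ pset m g r i from ⟨hjm, hij, hrec i ((mem_P_iff hk).1 hi).1 hij⟩)
  omega

lemma lt_of_p_eq {i z : ℕ} (hz : 1 ≤ z) (h : p m g r i = z) :
    i < z ∧ z ≤ m ∧ r z / g z < r i / g i := by
  subst h
  obtain ⟨h1, h2, h3⟩ := p_mem_pset (pdef_of_p_pos hz)
  exact ⟨h2, h1, h3⟩

lemma child_unique {k z i j : ℕ} (hz : 1 ≤ z) (hk : k ≤ m) (hi : i ∈ P m g r k)
    (hpi : p m g r i = z) (hj : j ∈ P m g r k) (hpj : p m g r j = z) : i = j :=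
  le_antisymm (le_of_mem_P_of_p_eq hk hj hpj hi (lt_of_p_eq hz hpi).1)
    (le_of_mem_P_of_p_eq hk hi hpi hj (lt_of_p_eq hz hpj).1)

lemma exists_child {k z : ℕ} (h : z ∈ P m g r k) (hne : k ≠ z) :
    ∃ i, i ∈ P m g r k ∧ p m g r i = z := by
  rcases Relation.ReflTransGen.cases_tail h with h | ⟨i, hi, -, hz⟩
  · exact absurd h.symm hne
  · exact ⟨i, hi, hz.symm⟩

lemma chil_spec {k z : ℕ} (hk : k ∈ A m g r z) (hne : k ≠ z) :
    p m g r (chil m g r z k) = z ∧ chil m g r z k ∈ P m g r k := by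
  obtain ⟨i, hi, hpi⟩ := exists_child hk.2.2 hne
  have h : chil m g r z k ∈ {i | p m g r i = z ∧ k ∈ A m g r i} :=
    Nat.sInf_mem ⟨i, hpi, hk.1, hk.2.1, hi⟩
  exact ⟨h.1, h.2.2.2⟩

lemma idxT_spec {k z : ℕ} (hk : 1 ≤ k) (hkz : k ≤ z) (hz : z ≤ m) :
    idxT m g r z k ∈ T m g r z ∧ idxT m g r z k ∈ P m g r k := by
  obtain ⟨i, hi, hiT⟩ := exists_mem_P_mem_T (g := g) (r := r) hk hkz hz
  have h : idxT m g r z k ∈ {i | i ∈ T m g r z ∧ k ∈ A m g r i} :=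
    Nat.sInf_mem ⟨i, hiT, hk, hkz.trans hz, hi⟩
  exact ⟨h.1, h.2.2.2⟩

/-- The tree rooted at `z` is an interval ending at `z`. -/
lemma exists_A_iff_Icc {z : ℕ} (hz1 : 1 ≤ z) (hz : z ≤ m) :
    ∃ a, 1 ≤ a ∧ ∀ i, i ∈ A m g r z ↔ a ≤ i ∧ i ≤ z := by
  have hmem : sInf (A m g r z) ∈ A m g r z :=
    Nat.sInf_mem ⟨z, hz1, hz, Relation.ReflTransGen.refl⟩
  refine ⟨sInf (A m g r z), hmem.1, fun i => ⟨fun hi => ⟨Nat.sInf_le hi,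
    ((mem_P_iff hi.2.1).1 hi.2.2).1⟩, fun hi => ⟨hmem.1.trans hi.1, hi.2.trans hz, ?_⟩⟩⟩
  exact P_of_mem_of_le hmem.2.1 hmem.2.2 hi.1 hi.2

lemma TIcc_eq {k : ℕ} (hk1 : 1 ≤ k) (hk : k ≤ m) :
    TIcc m g r k = (Finset.Icc 1 k).filter (fun z => z ∈ T m g r k) := by
  ext z
  simp only [TIcc, Finset.mem_filter, Finset.mem_insert, Finset.mem_Icc]
  refine ⟨fun h => ?_, fun h => ⟨Or.inr ⟨h.1.1, h.1.2.trans hk⟩, h.2⟩⟩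
  have := (mem_T_iff hk1 hk).1 h.2
  exact ⟨⟨this.1, this.2.1⟩, h.2⟩

lemma mem_TIcc_iff {k z : ℕ} (hk1 : 1 ≤ k) (hk : k ≤ m) :
    z ∈ TIcc m g r k ↔ z ∈ T m g r k := by
  rw [TIcc_eq hk1 hk, Finset.mem_filter, Finset.mem_Icc, and_iff_right_iff_imp]
  exact fun h => ⟨((mem_T_iff hk1 hk).1 h).1, ((mem_T_iff hk1 hk).1 h).2.1⟩

lemma T_subset_of_mem {c n : ℕ} (hc1 : 1 ≤ c) (hn1 : 1 ≤ n) (hn : n ≤ m)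
    (hc : c ∈ T m g r n) :
    T m g r c ⊆ T m g r n := by
  intro i hi
  obtain ⟨-, hcn, hcmin⟩ := (mem_T_iff hn1 hn).1 hc
  obtain ⟨hi1, hic, himin⟩ := (mem_T_iff hc1 (hcn.trans hn)).1 hi
  refine (mem_T_iff hn1 hn).2 ⟨hi1, hic.trans hcn, fun w hw1 hw2 => ?_⟩
  by_cases hwc : w ≤ c
  · exact himin w hw1 hwc
  · have hci : r i / g i ≤ r c / g c := by
      rcases hic.eq_or_lt with rfl | h
      · exact le_rfl
      · exact himin c h le_rfl
    exact hci.trans (hcmin w (not_le.1 hwc) hw2)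

end Forest

/-- Abel summation against a monotone weight. -/
lemma abel_nonneg {σ D : ℕ → ℝ} {a n : ℕ} (han : a ≤ n)
    (hσ : ∀ i j, a ≤ i → i ≤ j → j ≤ n → σ i ≤ σ j) (hσa : 0 ≤ σ a)
    (hD : ∀ i, a ≤ i → i ≤ n → 0 ≤ D i) :
    0 ≤ ∑ i ∈ Finset.Ico a n, (D i - D (i + 1)) * σ i + D n * σ n := by
  refine (mul_nonneg (hD a le_rfl han) hσa).trans ?_
  induction n, han using Nat.le_induction with
  | base => simp
  | succ n han ih =>
    have h1 := ih (fun i j h1 h2 h3 => hσ i j h1 h2 (h3.trans n.le_succ))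
      (fun i h1 h2 => hD i h1 (h2.trans n.le_succ))
    have h2 := mul_le_mul_of_nonneg_left (hσ n (n + 1) han n.le_succ le_rfl)
      (hD (n + 1) (han.trans n.le_succ) le_rfl)
    rw [Finset.sum_Ico_succ_top han]
    linarith

lemma sum_Ico_sub_succ {D : ℕ → ℝ} {a n : ℕ} (han : a ≤ n) :
    ∑ i ∈ Finset.Ico a n, (D i - D (i + 1)) = D a - D n := by
  induction n, han using Nat.le_induction with
  | base => simp
  | succ n han ih => rw [Finset.sum_Ico_succ_top han, ih]; ring

section Level

variable {ι : Type*} {m : ℕ} {g r : ℕ → ℝ} {s : ι → ℝ} {X Y : Finset ι}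

/-- The total size of the jobs in the trees rooted at nodes of `T zs` with index at least `i`. -/
noncomputable def sizeGe (m : ℕ) (g r : ℕ → ℝ) (s : ι → ℝ) (X : Finset ι) (zs i : ℕ) : ℝ :=
  ∑ z ∈ (TIcc m g r zs).filter (fun z => i ≤ z), SH m g r s X z

/-- The total capacity of the machines of type `zs` in `cn zs`. -/
noncomputable def topCap (m : ℕ) (g r : ℕ → ℝ) (s : ι → ℝ) (X : Finset ι) (zs : ℕ) : ℝ :=
  (⌈SH m g r s X zs / g zs⌉₊ : ℝ) * g zs

/-- The total capacity of the machines of types at least `i` in `cn zs`. -/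
noncomputable def level (m : ℕ) (g r : ℕ → ℝ) (s : ι → ℝ) (X : Finset ι) (zs i : ℕ) : ℝ :=
  max (sizeGe m g r s X zs i) (topCap m g r s X zs)

lemma SH_nonneg (hs : ∀ J ∈ X, 0 < s J) (z : ℕ) : 0 ≤ SH m g r s X z :=
  Finset.sum_nonneg fun J hJ => (hs J (Finset.mem_filter.1 hJ).1).le

lemma SH_mono (hXY : X ⊆ Y) (hs : ∀ J ∈ Y, 0 < s J) (z : ℕ) :
    SH m g r s X z ≤ SH m g r s Y z :=
  Finset.sum_le_sum_of_subset_of_nonneg (Finset.filter_subset_filter _ hXY)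
    fun J hJ _ => (hs J (Finset.mem_filter.1 hJ).1).le

lemma SH_le_topCap {zs : ℕ} (hg : 0 < g zs) : SH m g r s X zs ≤ topCap m g r s X zs := by
  rw [topCap, ← div_le_iff₀ hg]
  exact Nat.le_ceil _

lemma topCap_le {zs : ℕ} (hg : 0 < g zs) (hs : ∀ J ∈ X, 0 < s J) :
    topCap m g r s X zs ≤ SH m g r s X zs + g zs := by
  have h := (Nat.ceil_lt_add_one (div_nonneg (SH_nonneg (m := m) (g := g) (r := r) hs zs) hg.le)).le
  have := mul_le_mul_of_nonneg_right h hg.le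
  rwa [add_mul, one_mul, div_mul_cancel₀ _ hg.ne'] at this

lemma sizeGe_antitone (hs : ∀ J ∈ X, 0 < s J) (zs : ℕ) :
    Antitone (sizeGe m g r s X zs) := by
  intro i j hij
  refine Finset.sum_le_sum_of_subset_of_nonneg ?_ fun z _ _ => SH_nonneg hs z
  exact Finset.monotone_filter_right _ fun z _ hz => hij.trans hz

lemma level_antitone (hs : ∀ J ∈ X, 0 < s J) (zs : ℕ) : Antitone (level m g r s X zs) :=
  fun _ _ hij => max_le_max_right _ (sizeGe_antitone hs zs hij)

lemma sizeGe_eq_add {zs i : ℕ} (hi : i ∈ TIcc m g r zs) :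
    sizeGe m g r s X zs i = SH m g r s X i + sizeGe m g r s X zs (i + 1) := by
  have : (TIcc m g r zs).filter (fun z => i ≤ z) =
      insert i ((TIcc m g r zs).filter (fun z => i + 1 ≤ z)) := by
    ext z
    simp only [Finset.mem_filter, Finset.mem_insert]
    constructor
    · rintro ⟨h1, h2⟩
      rcases h2.eq_or_lt with h | h
      · exact Or.inl h.symm
      · exact Or.inr ⟨h1, h⟩
    · rintro (rfl | ⟨h1, h2⟩)
      · exact ⟨hi, le_rfl⟩
      · exact ⟨h1, by omega⟩
  rw [sizeGe, this, Finset.sum_insert (by simp), sizeGe]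

lemma sizeGe_eq_of_not_mem {zs i : ℕ} (hi : i ∉ TIcc m g r zs) :
    sizeGe m g r s X zs i = sizeGe m g r s X zs (i + 1) := by
  rw [sizeGe, sizeGe]
  congr 1
  refine Finset.filter_congr fun z hz => ?_
  have : z ≠ i := fun h => hi (h ▸ hz)
  omega

lemma cn_mul_of_lt (hs : ∀ J ∈ X, 0 < s J) {zs i : ℕ} (hi : i < zs) (hiT : i ∈ T m g r zs)
    (hmem : i ∈ TIcc m g r zs) (hg : 0 < g i) :
    cn m g r s X zs i * g i = level m g r s X zs i - level m g r s X zs (i + 1) := by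
  have hadd := sizeGe_eq_add (s := s) (X := X) hmem
  have hSH := SH_nonneg (m := m) (g := g) (r := r) hs i
  have hcn : cn m g r s X zs i =
      if sizeGe m g r s X zs (i + 1) ≤ topCap m g r s X zs ∧
          topCap m g r s X zs < sizeGe m g r s X zs i
      then (sizeGe m g r s X zs i - topCap m g r s X zs) / g i
      else if topCap m g r s X zs < sizeGe m g r s X zs (i + 1) then SH m g r s X i / g i
      else 0 := by
    simp only [cn, if_neg hi.ne, if_pos hiT, sizeGe, topCap, Nat.succ_le_iff]
  rw [hcn, level, level]
  split_ifs with h1 h2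
  · rw [div_mul_cancel₀ _ hg.ne', max_eq_left h1.2.le, max_eq_right h1.1]
  · rw [div_mul_cancel₀ _ hg.ne', max_eq_left (by linarith), max_eq_left h2.le]
    linarith
  · have h3 : sizeGe m g r s X zs i ≤ topCap m g r s X zs := by
      by_contra! h
      exact h1 ⟨not_lt.1 h2, h⟩
    rw [max_eq_right h3, max_eq_right (not_lt.1 h2)]
    ring

lemma level_top {zs : ℕ} (h1 : 1 ≤ zs) (hm : zs ≤ m) (hg : 0 < g zs) :
    level m g r s X zs zs = topCap m g r s X zs := by
  have hmem : zs ∈ TIcc m g r zs := (mem_TIcc_iff h1 hm).2 (Or.inl rfl)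
  have hempty : sizeGe m g r s X zs (zs + 1) = 0 := by
    rw [sizeGe, Finset.filter_false_of_mem, Finset.sum_empty]
    intro z hz
    have := ((mem_T_iff h1 hm).1 ((mem_TIcc_iff h1 hm).1 hz)).2.1
    omega
  rw [level, sizeGe_eq_add hmem, hempty, add_zero, max_eq_right (SH_le_topCap hg)]

lemma sum_cn_eq (hs : ∀ J ∈ X, 0 < s J) (hg : ∀ i, 1 ≤ i → i ≤ m → 0 < g i) {zs zt a : ℕ}
    (h1 : 1 ≤ zs) (hm : zs ≤ m) (ha : 1 ≤ a) (hazs : a ≤ zs) (hzt : zs ≤ zt)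
    (hA : ∀ i, i ∈ A m g r zt ↔ a ≤ i ∧ i ≤ zt) :
    ∑ z ∈ (TIcc m g r zs).filter (fun z => z ∈ A m g r zt), cn m g r s X zs z * r z =
      ∑ i ∈ Finset.Ico a zs,
          (level m g r s X zs i - level m g r s X zs (i + 1)) * (r i / g i) +
        level m g r s X zs zs * (r zs / g zs) := by
  have hset : (TIcc m g r zs).filter (fun z => z ∈ A m g r zt) =
      (Finset.Icc a zs).filter (fun z => z ∈ T m g r zs) := by
    ext z
    rw [Finset.mem_filter, Finset.mem_filter, mem_TIcc_iff h1 hm, hA, Finset.mem_Icc]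
    refine ⟨fun h => ⟨⟨h.2.1, ((mem_T_iff h1 hm).1 h.1).2.1⟩, h.1⟩,
      fun h => ⟨h.2, h.1.1, h.1.2.trans hzt⟩⟩
  rw [hset, Finset.sum_filter, ← Finset.sum_Ico_add_eq_sum_Icc hazs]
  congr 1
  · refine Finset.sum_congr rfl fun i hi => ?_
    obtain ⟨hai, hi⟩ := Finset.mem_Ico.1 hi
    have hgi := hg i (by omega) (by omega)
    split_ifs with hT
    · rw [← cn_mul_of_lt hs hi hT ((mem_TIcc_iff h1 hm).2 hT) hgi]
      field_simp
    · rw [level, level, sizeGe_eq_of_not_mem (fun h => hT ((mem_TIcc_iff h1 hm).1 h))]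
      ring
  · have hgz := hg zs h1 hm
    rw [if_pos (show zs ∈ T m g r zs from Or.inl rfl), level_top h1 hm hgz, topCap, cn]
    simp only [if_true]
    field_simp

/-- The cost of `cn` does not decrease when the job set expands and the top type `c` is replaced
by a type `n` of which `c` is a node of `T n`. -/
lemma sum_cn_mono (hsX : ∀ J ∈ X, 0 < s J) (hsY : ∀ J ∈ Y, 0 < s J)
    (hg : ∀ i, 1 ≤ i → i ≤ m → 0 < g i) (hr : ∀ i, 1 ≤ i → i ≤ m → 0 < r i)
    (hXY : X ⊆ Y) {c n zt : ℕ} (hc1 : 1 ≤ c) (hcn : c ≤ n) (hnzt : n ≤ zt)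
    (hcT : c ∈ T m g r n) (hzt : zt ∈ P m g r c) (hm : n ≤ m)
    (hcap : topCap m g r s X c ≤ level m g r s Y n c) :
    ∑ z ∈ (TIcc m g r c).filter (fun z => z ∈ A m g r zt), cn m g r s X c z * r z ≤
      ∑ z ∈ (TIcc m g r n).filter (fun z => z ∈ A m g r zt), cn m g r s Y n z * r z := by
  have hcm := hcn.trans hm
  have hn1 := hc1.trans hcn
  obtain ⟨a, ha, hA⟩ := exists_A_iff_Icc (g := g) (r := r) (z := zt) (by omega)
    ((mem_P_iff hcm).1 hzt).2.1
  have hac : a ≤ c := ((hA c).1 ⟨hc1, hcm, hzt⟩).1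
  rw [sum_cn_eq hsX hg hc1 hcm ha hac (hcn.trans hnzt) hA,
    sum_cn_eq hsY hg hn1 hm ha (hac.trans hcn) hnzt hA]
  set LX := level m g r s X c with hLX
  set LY := level m g r s Y n with hLY
  have hle : ∀ i, a ≤ i → i ≤ c → LX i ≤ LY i := by
    intro i _ hic
    refine max_le (le_trans ?_ (le_max_left _ _)) (hcap.trans (level_antitone hsY n hic))
    refine (Finset.sum_le_sum fun z _ => SH_mono hXY hsY z).trans
      (Finset.sum_le_sum_of_subset_of_nonneg ?_ fun z _ _ => SH_nonneg hsY z)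
    refine Finset.filter_subset_filter _ fun z hz => ?_
    rw [mem_TIcc_iff hc1 hcm] at hz
    exact (mem_TIcc_iff hn1 hm).2 (T_subset_of_mem hc1 hn1 hm hcT hz)
  have hT : ∀ i, c ≤ i → i ≤ n → r c / g c ≤ r i / g i := by
    intro i hci hin
    rcases hci.eq_or_lt with rfl | h
    · exact le_rfl
    · exact ((mem_T_iff hn1 hm).1 hcT).2.2 i h hin
  have hupper : LY c * (r c / g c) ≤
      ∑ i ∈ Finset.Ico c n, (LY i - LY (i + 1)) * (r i / g i) + LY n * (r n / g n) := by
    have hLYn : 0 ≤ LY n := by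
      rw [hLY, level_top hn1 hm (hg n hn1 hm)]
      exact mul_nonneg (Nat.cast_nonneg _) (hg n hn1 hm).le
    have h1 : ∑ i ∈ Finset.Ico c n, (LY i - LY (i + 1)) * (r c / g c) ≤
        ∑ i ∈ Finset.Ico c n, (LY i - LY (i + 1)) * (r i / g i) := by
      refine Finset.sum_le_sum fun i hi => ?_
      obtain ⟨h1, h2⟩ := Finset.mem_Ico.1 hi
      exact mul_le_mul_of_nonneg_left (hT i h1 h2.le)
        (sub_nonneg.2 (level_antitone hsY n i.le_succ))
    have h2 := mul_le_mul_of_nonneg_left (hT n hcn le_rfl) hLYn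
    rw [← Finset.sum_mul, sum_Ico_sub_succ hcn] at h1
    linarith
  let σ : ℕ → ℝ := fun i => sInf ((fun w => r w / g w) '' Set.Icc i c)
  have hbdd : ∀ i, BddBelow ((fun w => r w / g w) '' Set.Icc i c) := fun i =>
    ((Set.finite_Icc i c).image _).bddBelow
  have hσT : ∀ i ∈ T m g r c, σ i = r i / g i := by
    intro i hi
    obtain ⟨-, hic, hmin⟩ := (mem_T_iff hc1 hcm).1 hi
    refine IsLeast.csInf_eq ⟨⟨i, ⟨le_rfl, hic⟩, rfl⟩, ?_⟩
    rintro _ ⟨w, ⟨hiw, hwc⟩, rfl⟩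
    rcases hiw.eq_or_lt with rfl | h
    · exact le_rfl
    · exact hmin w h hwc
  have hσ : ∀ i j, a ≤ i → i ≤ j → j ≤ c → σ i ≤ σ j := fun i j _ hij hjc =>
    csInf_le_csInf (hbdd i) ⟨_, j, ⟨le_rfl, hjc⟩, rfl⟩
      (Set.image_mono (Set.Icc_subset_Icc_left hij))
  have hσa : 0 ≤ σ a := by
    refine Real.sInf_nonneg ?_
    rintro _ ⟨w, ⟨haw, hwc⟩, rfl⟩
    exact (div_pos (hr w (by omega) (by omega)) (hg w (by omega) (by omega))).le
  have habel := abel_nonneg (σ := σ) (D := fun i => LY i - LX i) hac hσ hσa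
    fun i h1 h2 => sub_nonneg.2 (hle i h1 h2)
  have hlower : ∑ i ∈ Finset.Ico a c, (LY i - LX i - (LY (i + 1) - LX (i + 1))) * σ i =
      ∑ i ∈ Finset.Ico a c, (LY i - LY (i + 1)) * (r i / g i) -
        ∑ i ∈ Finset.Ico a c, (LX i - LX (i + 1)) * (r i / g i) := by
    rw [← Finset.sum_sub_distrib]
    refine Finset.sum_congr rfl fun i hi => ?_
    obtain ⟨h1, h2⟩ := Finset.mem_Ico.1 hi
    by_cases hiT : i ∈ T m g r c
    · rw [hσT i hiT]; ring
    · have hX : LX i = LX (i + 1) := by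
        rw [hLX, level, level, sizeGe_eq_of_not_mem fun h => hiT ((mem_TIcc_iff hc1 hcm).1 h)]
      have hY : LY i = LY (i + 1) := by
        rw [hLY, level, level, sizeGe_eq_of_not_mem fun h => hiT ?_]
        obtain ⟨h3, -, h4⟩ := (mem_T_iff hn1 hm).1 ((mem_TIcc_iff hn1 hm).1 h)
        exact (mem_T_iff hc1 hcm).2 ⟨h3, h2.le, fun w hw1 hw2 => h4 w hw1 (hw2.trans hcn)⟩
      rw [hX, hY]; ring
  rw [hlower, hσT c (Or.inl rfl)] at habel
  rw [← Finset.sum_Ico_consecutive _ hac hcn]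
  linarith

end Level

section Charge

variable {ι : Type*} {m : ℕ} {g r : ℕ → ℝ} {s : ι → ℝ} {X Y : Finset ι}

lemma mty_spec (hm : 1 ≤ m) {J : ι} (hJ : s J ≤ g m) :
    1 ≤ mty m g s J ∧ mty m g s J ≤ m :=
  have h : mty m g s J ∈ {z | 1 ≤ z ∧ z ≤ m ∧ s J ≤ g z} := Nat.sInf_mem ⟨m, hm, le_rfl, hJ⟩
  ⟨h.1, h.2.1⟩

lemma lt_size_of_lt_mty {J : ι} {c : ℕ} (hc1 : 1 ≤ c) (hcm : c ≤ m) (hc : c < mty m g s J) :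
    g c < s J := by
  by_contra! h
  have : mty m g s J ≤ c := Nat.sInf_le ⟨hc1, hcm, h⟩
  omega

lemma mty_le_k0f {J : ι} (hJ : J ∈ X) : mty m g s J ≤ k0f m g s X :=
  Finset.le_sup (f := fun J => mty m g s J) hJ

lemma exists_mty_eq_k0f (hX : X.Nonempty) : ∃ J ∈ X, mty m g s J = k0f m g s X := by
  obtain ⟨J, hJ, h⟩ := Finset.exists_mem_eq_sup X hX (fun J => mty m g s J)
  exact ⟨J, hJ, h.symm⟩

lemma k0f_bounds (hm : 1 ≤ m) (hX : X.Nonempty) (hs : ∀ J ∈ X, s J ≤ g m) :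
    1 ≤ k0f m g s X ∧ k0f m g s X ≤ m := by
  obtain ⟨J, hJ, h⟩ := exists_mty_eq_k0f (m := m) (g := g) (s := s) hX
  exact h ▸ mty_spec hm (hs J hJ)

lemma zdia_spec (hm : 1 ≤ m) (hX : X.Nonempty) (hs : ∀ J ∈ X, s J ≤ g m) :
    zdia m g r s X ∈ P m g r (k0f m g s X) ∧ decent m g r s X (zdia m g r s X) := by
  obtain ⟨hk1, hkm⟩ := k0f_bounds hm hX hs
  obtain ⟨i, hi, hiT⟩ := exists_mem_P_mem_T (g := g) (r := r) hk1 hkm le_rfl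
  obtain ⟨-, him, hmin⟩ := (mem_T_iff hm le_rfl).1 hiT
  refine Nat.sInf_mem (s := {zs | zs ∈ P m g r (k0f m g s X) ∧ decent m g r s X zs})
    ⟨i, hi, fun zt hzt hne => ?_⟩
  obtain ⟨h1, h2, h3⟩ := (mem_P_iff him).1 hzt
  have hlt := lt_of_le_of_ne h1 hne.symm
  exact absurd (h3 i le_rfl hlt) (not_lt.2 (hmin zt hlt h2))

lemma zdia_bounds (hm : 1 ≤ m) (hX : X.Nonempty) (hs : ∀ J ∈ X, s J ≤ g m) :
    k0f m g s X ≤ zdia m g r s X ∧ zdia m g r s X ≤ m :=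
  have h := (mem_P_iff (k0f_bounds hm hX hs).2).1 (zdia_spec hm hX hs).1
  ⟨h.1, h.2.1⟩

lemma zdia_mono (hm : 1 ≤ m) (hg : ∀ i, 1 ≤ i → i ≤ m → 0 < g i)
    (hr : ∀ i, 1 ≤ i → i ≤ m → 0 < r i) (hXY : X ⊆ Y) (hX : X.Nonempty)
    (hs : ∀ J ∈ Y, 0 < s J ∧ s J ≤ g m) : zdia m g r s X ≤ zdia m g r s Y := by
  have hY := hX.mono hXY
  have hsY : ∀ J ∈ Y, 0 < s J := fun J hJ => (hs J hJ).1
  have hsX : ∀ J ∈ X, 0 < s J := fun J hJ => hsY J (hXY hJ)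
  have hbY : ∀ J ∈ Y, s J ≤ g m := fun J hJ => (hs J hJ).2
  have hbX : ∀ J ∈ X, s J ≤ g m := fun J hJ => hbY J (hXY hJ)
  by_contra! hlt
  obtain ⟨hkX1, hkXm⟩ := k0f_bounds hm hX hbX
  obtain ⟨hkY1, hkYm⟩ := k0f_bounds hm hY hbY
  obtain ⟨hzX, -⟩ := zdia_spec (r := r) hm hX hbX
  obtain ⟨hzY, hdecY⟩ := zdia_spec (r := r) hm hY hbY
  obtain ⟨-, hzXm⟩ := zdia_bounds (r := r) hm hX hbX
  obtain ⟨hkzY, hzYm⟩ := zdia_bounds (r := r) hm hY hbY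
  have hkk : k0f m g s X ≤ k0f m g s Y := Finset.sup_mono hXY
  set n := zdia m g r s Y with hn
  have hn1 : 1 ≤ n := hkY1.trans hkzY
  obtain ⟨c, hcP, hcT⟩ := exists_mem_P_mem_T (g := g) (r := r) hkX1 (hkk.trans hkzY) hzYm
  obtain ⟨hc1, hcn, hcmin⟩ := (mem_T_iff hn1 hzYm).1 hcT
  have hcm := hcn.trans hzYm
  have hcap : topCap m g r s X c ≤ level m g r s Y n c := by
    rcases hcn.eq_or_lt with heq | hcn'
    · rw [heq, level_top hn1 hzYm (hg n hn1 hzYm)]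
      have hgn := hg n hn1 hzYm
      refine mul_le_mul_of_nonneg_right (Nat.cast_le.2 (Nat.ceil_mono ?_)) hgn.le
      exact div_le_div_of_nonneg_right (SH_mono hXY hsY n) hgn.le
    · have hck : c < k0f m g s Y := by
        by_contra! h
        exact absurd (((mem_P_iff hkYm).1 hzY).2.2 c h hcn') (not_lt.2 (hcmin n hcn' le_rfl))
      obtain ⟨J, hJ, hJk⟩ := exists_mty_eq_k0f (m := m) (g := g) (s := s) hY
      have hgJ : g c < s J := lt_size_of_lt_mty hc1 hcm (hJk ▸ hck)
      have hJH : s J ≤ SH m g r s Y n :=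
        Finset.single_le_sum (f := s) (fun J' hJ' => (hsY J' (Finset.mem_filter.1 hJ').1).le)
          (Finset.mem_filter.2 ⟨hJ, by rw [hJk]; exact ⟨hkY1, hkYm, hzY⟩⟩)
      have hnT : n ∈ (TIcc m g r n).filter (fun z => c + 1 ≤ z) :=
        Finset.mem_filter.2 ⟨(mem_TIcc_iff hn1 hzYm).2 (Or.inl rfl), hcn'⟩
      have hsize : SH m g r s Y n ≤ sizeGe m g r s Y n (c + 1) :=
        Finset.single_le_sum (f := SH m g r s Y) (fun z _ => SH_nonneg hsY z) hnT
      have hadd := sizeGe_eq_add (s := s) (X := Y) ((mem_TIcc_iff hn1 hzYm).2 hcT)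
      have h1 := topCap_le (m := m) (r := r) (hg c hc1 hcm) hsX
      have h2 := SH_mono (m := m) (g := g) (r := r) hXY hsY c
      exact le_trans (by linarith) (le_max_left _ _)
  have hdec : decent m g r s X c := by
    intro zt hzt hne
    obtain ⟨hczt, hztm, -⟩ := (mem_P_iff hcm).1 hzt
    have hnzt : n < zt := by
      by_contra! h
      have := le_of_mem_P_of_mem_T hn1 hkXm hzYm hcP hcT (P_trans hcP hzt) h
      omega
    exact (sum_cn_mono hsX hsY hg hr hXY hc1 hcn hnzt.le hcT hzt hzYm hcap).trans
      (hdecY zt (P_of_mem_of_le hcm hzt hcn hnzt.le) hnzt.ne')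
  have : zdia m g r s X ≤ c := Nat.sInf_le ⟨hcP, hdec⟩
  omega

/-- The total size of the jobs of `X` of exact type `z`. -/
noncomputable def exactSize (m : ℕ) (g : ℕ → ℝ) (s : ι → ℝ) (X : Finset ι) (z : ℕ) : ℝ :=
  Ssum s (X.filter (fun J' => mty m g s J' = z))

/-- The total cost of the jobs in the proper subtrees of `z`, at the rates of the children. -/
noncomputable def childCost (m : ℕ) (g r : ℕ → ℝ) (s : ι → ℝ) (X : Finset ι) (z : ℕ) : ℝ :=
  ∑ i ∈ fchFin m g r z, SH m g r s X i * (r i / g i)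

lemma exactSize_nonneg (hs : ∀ J ∈ X, 0 < s J) (z : ℕ) : 0 ≤ exactSize m g s X z :=
  Finset.sum_nonneg fun J hJ => (hs J (Finset.mem_filter.1 hJ).1).le

lemma exactSize_mono (hXY : X ⊆ Y) (hs : ∀ J ∈ Y, 0 < s J) (z : ℕ) :
    exactSize m g s X z ≤ exactSize m g s Y z :=
  Finset.sum_le_sum_of_subset_of_nonneg (Finset.filter_subset_filter _ hXY)
    fun J hJ _ => (hs J (Finset.mem_filter.1 hJ).1).le

lemma childCost_mono (hg : ∀ i, 1 ≤ i → i ≤ m → 0 < g i) (hr : ∀ i, 1 ≤ i → i ≤ m → 0 < r i)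
    (hXY : X ⊆ Y) (hs : ∀ J ∈ Y, 0 < s J) (z : ℕ) :
    childCost m g r s X z ≤ childCost m g r s Y z := by
  refine Finset.sum_le_sum fun i hi => ?_
  obtain ⟨h1, h2⟩ := Finset.mem_Icc.1 (Finset.mem_filter.1 hi).1
  exact mul_le_mul_of_nonneg_right (SH_mono hXY hs i) (div_pos (hr i h1 h2) (hg i h1 h2)).le

/-- The jobs in the tree rooted at `z` are those of exact type `z` and those in the trees rooted at
the children of `z`. -/
lemma SH_eq_exactSize_add (hm : 1 ≤ m) (hs : ∀ J ∈ X, s J ≤ g m) {z : ℕ} (hz : 1 ≤ z)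
    (hzm : z ≤ m) :
    SH m g r s X z = exactSize m g s X z + ∑ i ∈ fchFin m g r z, SH m g r s X i := by
  simp only [SH, exactSize, Ssum, H, Finset.sum_filter]
  rw [Finset.sum_comm, ← Finset.sum_add_distrib]
  refine Finset.sum_congr rfl fun J hJ => ?_
  obtain ⟨hk1, hkm⟩ := mty_spec hm (hs J hJ)
  have hzself : z ∈ A m g r z := ⟨hz, hzm, Relation.ReflTransGen.refl⟩
  have hchild : ∀ i ∈ fchFin m g r z, mty m g s J ∈ A m g r i →
      mty m g s J ∈ A m g r z ∧ mty m g s J ≠ z := by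
    intro i hi hk
    have hpi : p m g r i = z := (Finset.mem_filter.1 hi).2
    have hiz := (lt_of_p_eq hz hpi).1
    have hki := ((mem_P_iff hkm).1 hk.2.2).1
    refine ⟨⟨hk1, hkm, Relation.ReflTransGen.tail hk.2.2 ⟨?_, hpi.symm⟩⟩, by omega⟩
    exact pdef_of_p_pos (by omega)
  by_cases hkz : mty m g s J = z
  · rw [if_pos hkz, if_pos (by rwa [hkz]), Finset.sum_eq_zero, add_zero]
    exact fun i hi => if_neg fun h => (hchild i hi h).2 hkz
  · rw [if_neg hkz, zero_add]
    split_ifs with hA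
    · obtain ⟨hp, hP⟩ := chil_spec hA hkz
      obtain ⟨hlo, hhi, -⟩ := (mem_P_iff hkm).1 hP
      rw [Finset.sum_eq_single (chil m g r z (mty m g s J))]
      · rw [if_pos ⟨hk1, hkm, hP⟩]
      · intro i hi hne
        exact if_neg fun h =>
          hne (child_unique hz hkm h.2.2 (Finset.mem_filter.1 hi).2 hP hp)
      · intro h
        exact absurd (Finset.mem_filter.2 ⟨Finset.mem_Icc.2 ⟨hk1.trans hlo, hhi⟩, hp⟩) h
    · rw [Finset.sum_eq_zero]
      exact fun i hi => if_neg fun h => hA (hchild i hi h).1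

/-- The denominator of `α*` in closed form. -/
lemma denominator_eq (hm : 1 ≤ m) (hs : ∀ J ∈ X, s J ≤ g m) {z : ℕ} (hz : 1 ≤ z) (hzm : z ≤ m) :
    ∑ i ∈ fchFin m g r z, ∑ J' ∈ H m g r s i X, s J' * (r i / g i - r z / g z) =
      exactSize m g s X z * (r z / g z) + childCost m g r s X z -
        SH m g r s X z * (r z / g z) := by
  rw [SH_eq_exactSize_add hm hs hz hzm, childCost, add_mul, Finset.sum_mul,
    add_sub_add_left_eq_sub, ← Finset.sum_sub_distrib]
  refine Finset.sum_congr rfl fun i _ => ?_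
  rw [← Finset.sum_mul, SH, Ssum]
  ring

lemma charge_eq (hm : 1 ≤ m) (hX : X.Nonempty) (hs : ∀ J ∈ X, s J ≤ g m) (J : ι) {z : ℕ}
    (hzd : zdia m g r s X = z) :
    charge m g r s X J =
      if mty m g s J ∈ A m g r z then
        if g z ≤ SH m g r s X z then s J * (r z / g z)
        else if r z < exactSize m g s X z * (r z / g z) + childCost m g r s X z then
          if mty m g s J = z then s J * (r z / g z)
          else s J * (r (chil m g r z (mty m g s J)) / g (chil m g r z (mty m g s J)) -
            (r (chil m g r z (mty m g s J)) / g (chil m g r z (mty m g s J)) - r z / g z) *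
              ((exactSize m g s X z * (r z / g z) + childCost m g r s X z - r z) /
                (exactSize m g s X z * (r z / g z) + childCost m g r s X z -
                  SH m g r s X z * (r z / g z))))
        else
          if mty m g s J = z then
            s J * (r z / g z) *
              (1 + (r z - (exactSize m g s X z * (r z / g z) + childCost m g r s X z)) /
                (exactSize m g s X z * (r z / g z)))
          else s J * (r (chil m g r z (mty m g s J)) / g (chil m g r z (mty m g s J)))
      else s J * (r (idxT m g r z (mty m g s J)) / g (idxT m g r z (mty m g s J))) := by
  obtain ⟨h1, -⟩ := k0f_bounds hm hX hs
  obtain ⟨h2, h3⟩ := zdia_bounds (r := r) hm hX hs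
  subst hzd
  rw [← denominator_eq hm hs (h1.trans h2) h3]
  rfl

lemma alpha_nonneg_le_one {c a b : ℝ} (hac : a < b) (hbc : b < c) :
    0 ≤ (c - b) / (c - a) ∧ (c - b) / (c - a) ≤ 1 :=
  ⟨div_nonneg (by linarith) (by linarith), (div_le_one (by linarith)).2 (by linarith)⟩

lemma alpha_mono {c c' a a' b : ℝ} (hbc : b < c) (hcc : c ≤ c') (haa : a ≤ a') (ha : a' < b) :
    (c - b) / (c - a) ≤ (c' - b) / (c' - a') := by
  rw [div_le_div_iff₀ (by linarith) (by linarith)]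
  nlinarith [mul_nonneg (sub_nonneg.2 hcc) (sub_nonneg.2 (haa.trans ha.le)),
    mul_nonneg (sub_nonneg.2 hbc.le) (sub_nonneg.2 haa)]

lemma SH_mul_lt {z : ℕ} (hgz : 0 < g z) (hrz : 0 < r z) (h : ¬ g z ≤ SH m g r s X z) :
    SH m g r s X z * (r z / g z) < r z := by
  have := mul_lt_mul_of_pos_right (not_le.1 h) (div_pos hrz hgz)
  rwa [mul_div_cancel₀ _ hgz.ne'] at this

/-- A job in the tree rooted at `z⋄` is charged at least the rate of `z⋄`. -/
lemma le_charge (hm : 1 ≤ m) (hg : ∀ i, 1 ≤ i → i ≤ m → 0 < g i)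
    (hr : ∀ i, 1 ≤ i → i ≤ m → 0 < r i) (hX : X.Nonempty)
    (hs : ∀ J ∈ X, 0 < s J ∧ s J ≤ g m) {J : ι} (hJ : J ∈ X)
    {z : ℕ} (hzd : zdia m g r s X = z) (hA : mty m g s J ∈ A m g r z) :
    s J * (r z / g z) ≤ charge m g r s X J := by
  have hb : ∀ J ∈ X, s J ≤ g m := fun J hJ => (hs J hJ).2
  obtain ⟨h1, -⟩ := k0f_bounds hm hX hb
  obtain ⟨h2, hzm⟩ := zdia_bounds (r := r) hm hX hb
  rw [hzd] at h2 hzm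
  have hz1 := h1.trans h2
  have hsJ := (hs J hJ).1
  have hρ := div_pos (hr z hz1 hzm) (hg z hz1 hzm)
  rw [charge_eq hm hX hb J hzd, if_pos hA]
  split_ifs with hS hc hk hk
  · exact le_rfl
  · exact le_rfl
  · have hlt := (lt_of_p_eq hz1 (chil_spec hA hk).1).2.2
    have hα := (alpha_nonneg_le_one (SH_mul_lt (hg z hz1 hzm) (hr z hz1 hzm) hS) hc).2
    refine mul_le_mul_of_nonneg_left ?_ hsJ.le
    have := mul_le_mul_of_nonneg_left hα (sub_nonneg.2 hlt.le)
    linarith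
  · refine le_mul_of_one_le_right (mul_pos hsJ hρ).le (le_add_of_nonneg_right ?_)
    exact div_nonneg (sub_nonneg.2 (not_lt.1 hc))
      (mul_nonneg (exactSize_nonneg (fun J hJ => (hs J hJ).1) z) hρ.le)
  · exact mul_le_mul_of_nonneg_left (lt_of_p_eq hz1 (chil_spec hA hk).1).2.2.le hsJ.le

/-- A job in the tree rooted at a child of `z⋄` is charged at most the rate of that child. -/
lemma charge_le_child (hm : 1 ≤ m) (hg : ∀ i, 1 ≤ i → i ≤ m → 0 < g i)
    (hr : ∀ i, 1 ≤ i → i ≤ m → 0 < r i) (hX : X.Nonempty)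
    (hs : ∀ J ∈ X, 0 < s J ∧ s J ≤ g m) {J : ι} (hJ : J ∈ X)
    {z : ℕ} (hzd : zdia m g r s X = z) (hA : mty m g s J ∈ A m g r z)
    (hk : mty m g s J ≠ z) :
    charge m g r s X J ≤
      s J * (r (chil m g r z (mty m g s J)) / g (chil m g r z (mty m g s J))) := by
  have hb : ∀ J ∈ X, s J ≤ g m := fun J hJ => (hs J hJ).2
  obtain ⟨h1, -⟩ := k0f_bounds hm hX hb
  obtain ⟨h2, hzm⟩ := zdia_bounds (r := r) hm hX hb
  rw [hzd] at h2 hzm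
  have hz1 := h1.trans h2
  have hsJ := (hs J hJ).1
  have hlt := (lt_of_p_eq hz1 (chil_spec hA hk).1).2.2
  rw [charge_eq hm hX hb J hzd, if_pos hA, if_neg hk, if_neg hk]
  split_ifs with hS hc
  · exact mul_le_mul_of_nonneg_left hlt.le hsJ.le
  · have hα := (alpha_nonneg_le_one (SH_mul_lt (hg z hz1 hzm) (hr z hz1 hzm) hS) hc).1
    exact mul_le_mul_of_nonneg_left (sub_le_self _ (mul_nonneg (sub_nonneg.2 hlt.le) hα)) hsJ.le
  · exact le_rfl

lemma charge_le_of_zdia_eq (hm : 1 ≤ m) (hg : ∀ i, 1 ≤ i → i ≤ m → 0 < g i)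
    (hr : ∀ i, 1 ≤ i → i ≤ m → 0 < r i) (hXY : X ⊆ Y) (hX : X.Nonempty)
    (hs : ∀ J ∈ Y, 0 < s J ∧ s J ≤ g m) {J : ι} (hJ : J ∈ X)
    (hzd : zdia m g r s Y = zdia m g r s X) :
    charge m g r s Y J ≤ charge m g r s X J := by
  have hY := hX.mono hXY
  have hpY : ∀ J ∈ Y, 0 < s J := fun J hJ => (hs J hJ).1
  have hbY : ∀ J ∈ Y, s J ≤ g m := fun J hJ => (hs J hJ).2
  have hbX : ∀ J ∈ X, s J ≤ g m := fun J hJ => hbY J (hXY hJ)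
  have hsX : ∀ J ∈ X, 0 < s J ∧ s J ≤ g m := fun J hJ => hs J (hXY hJ)
  obtain ⟨h1, -⟩ := k0f_bounds hm hX hbX
  obtain ⟨h2, hzm⟩ := zdia_bounds (r := r) hm hX hbX
  obtain ⟨z, hz⟩ : ∃ z, zdia m g r s X = z := ⟨_, rfl⟩
  rw [hz] at h2 hzm hzd
  have hz1 := h1.trans h2
  have hgz := hg z hz1 hzm
  have hrz := hr z hz1 hzm
  have hρ := div_pos hrz hgz
  have hsJ := (hsX J hJ).1
  have hSH := SH_mono (m := m) (g := g) (r := r) hXY hpY z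
  have hE := exactSize_mono (m := m) (g := g) hXY hpY z
  have hC := childCost_mono hg hr hXY hpY z
  have hEρ := mul_le_mul_of_nonneg_right hE hρ.le
  by_cases hA : mty m g s J ∈ A m g r z
  swap
  · rw [charge_eq hm hX hbX J hz, charge_eq hm hY hbY J hzd, if_neg hA, if_neg hA]
  by_cases hSY : g z ≤ SH m g r s Y z
  · rw [charge_eq hm hY hbY J hzd, if_pos hA, if_pos hSY]
    exact le_charge hm hg hr hX hsX hJ hz hA
  have hSX : ¬ g z ≤ SH m g r s X z := fun h => hSY (h.trans hSH)
  by_cases hk : mty m g s J = z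
  · by_cases hcY : r z < exactSize m g s Y z * (r z / g z) + childCost m g r s Y z
    · rw [charge_eq hm hY hbY J hzd, if_pos hA, if_neg hSY, if_pos hcY, if_pos hk]
      exact le_charge hm hg hr hX hsX hJ hz hA
    · have hcX : ¬ r z < exactSize m g s X z * (r z / g z) + childCost m g r s X z := by
        linarith
      rw [charge_eq hm hX hbX J hz, charge_eq hm hY hbY J hzd, if_pos hA, if_neg hSX, if_neg hSY,
        if_neg hcX, if_neg hcY, if_pos hk, if_pos hA, if_pos hk]
      refine mul_le_mul_of_nonneg_left ?_ (mul_pos hsJ hρ).le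
      have hE0 : 0 < exactSize m g s X z := hsJ.trans_le
        (Finset.single_le_sum (f := s) (fun J' hJ' => (hsX J' (Finset.mem_filter.1 hJ').1).1.le)
          (Finset.mem_filter.2 ⟨hJ, hk⟩))
      have hpos := mul_pos hE0 hρ
      gcongr
      linarith
  · by_cases hcX : r z < exactSize m g s X z * (r z / g z) + childCost m g r s X z
    · have hcY : r z < exactSize m g s Y z * (r z / g z) + childCost m g r s Y z := by
        linarith
      rw [charge_eq hm hX hbX J hz, charge_eq hm hY hbY J hzd, if_pos hA, if_neg hSX, if_neg hSY,
        if_pos hcX, if_pos hcY, if_neg hk, if_pos hA, if_neg hk]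
      have hlt := (lt_of_p_eq hz1 (chil_spec hA hk).1).2.2
      refine mul_le_mul_of_nonneg_left (sub_le_sub_left
        (mul_le_mul_of_nonneg_left ?_ (sub_nonneg.2 hlt.le)) _) hsJ.le
      exact alpha_mono hcX (add_le_add hEρ hC) (mul_le_mul_of_nonneg_right hSH hρ.le)
        (SH_mul_lt hgz hrz hSY)
    · rw [charge_eq hm hX hbX J hz, if_pos hA, if_neg hSX, if_neg hcX, if_neg hk]
      exact charge_le_child hm hg hr hY hs (hXY hJ) hzd hA hk

lemma charge_le_of_zdia_lt (hm : 1 ≤ m) (hg : ∀ i, 1 ≤ i → i ≤ m → 0 < g i)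
    (hr : ∀ i, 1 ≤ i → i ≤ m → 0 < r i) (hXY : X ⊆ Y) (hX : X.Nonempty)
    (hs : ∀ J ∈ Y, 0 < s J ∧ s J ≤ g m) {J : ι} (hJ : J ∈ X)
    (hlt : zdia m g r s X < zdia m g r s Y) :
    charge m g r s Y J ≤ charge m g r s X J := by
  have hY := hX.mono hXY
  have hbY : ∀ J ∈ Y, s J ≤ g m := fun J hJ => (hs J hJ).2
  have hbX : ∀ J ∈ X, s J ≤ g m := fun J hJ => hbY J (hXY hJ)
  have hsX : ∀ J ∈ X, 0 < s J ∧ s J ≤ g m := fun J hJ => hs J (hXY hJ)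
  have hsJ := (hsX J hJ).1
  obtain ⟨hk1, hkm⟩ := mty_spec hm (hbX J hJ)
  obtain ⟨hkzX, hzXm⟩ := zdia_bounds (r := r) hm hX hbX
  obtain ⟨-, hzYm⟩ := zdia_bounds (r := r) hm hY hbY
  have hkX := (mty_le_k0f (m := m) (g := g) (s := s) hJ).trans hkzX
  obtain ⟨i, hiP, hiz, hi⟩ : ∃ i, i ∈ P m g r (mty m g s J) ∧ i ≤ zdia m g r s X ∧
      s J * (r i / g i) ≤ charge m g r s X J := by
    by_cases hA : mty m g s J ∈ A m g r (zdia m g r s X)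
    · exact ⟨_, hA.2.2, le_rfl, le_charge hm hg hr hX hsX hJ rfl hA⟩
    · obtain ⟨hT, hP⟩ := idxT_spec (g := g) (r := r) hk1 hkX hzXm
      exact ⟨_, hP, ((mem_T_iff (hk1.trans hkX) hzXm).1 hT).2.1,
        by rw [charge_eq hm hX hbX J rfl, if_neg hA]⟩
  refine le_trans ?_ hi
  by_cases hA : mty m g s J ∈ A m g r (zdia m g r s Y)
  · have hne := (hkX.trans_lt hlt).ne
    obtain ⟨hp, hP⟩ := chil_spec hA hne
    refine (charge_le_child hm hg hr hY hs (hXY hJ) rfl hA hne).trans ?_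
    exact mul_le_mul_of_nonneg_left (ratio_le_of_mem_P hkm hiP hP
      (le_of_mem_P_of_p_eq hkm hP hp hiP (hiz.trans_lt hlt))) hsJ.le
  · have hkY := hkX.trans hlt.le
    obtain ⟨hT, hP⟩ := idxT_spec (g := g) (r := r) hk1 hkY hzYm
    rw [charge_eq hm hY hbY J rfl, if_neg hA]
    exact mul_le_mul_of_nonneg_left (ratio_le_of_mem_P hkm hiP hP
      (le_of_mem_P_of_mem_T (hk1.trans hkY) hkm hzYm hP hT hiP (hiz.trans hlt.le))) hsJ.le

end Charge

/-- Let `X ⊆ Y` be nonempty finite sets of jobs with sizes in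
`(0, g m]`.  Then for every job `J ∈ X`, `r̃(X)(J) ≥ r̃(Y)(J)`: the cost charged
to each job is non-increasing as the job set expands. -/
theorem statement_12 {ι : Type*} (m : ℕ) (g r : ℕ → ℝ) (s : ι → ℝ)
    (X Y : Finset ι)
    (hm : 1 ≤ m)
    (hg1 : 0 < g 1) (hr1 : 0 < r 1)
    (hg : ∀ i j, 1 ≤ i → i < j → j ≤ m → g i < g j)
    (hr : ∀ i j, 1 ≤ i → i < j → j ≤ m → r i < r j)
    (hXY : X ⊆ Y) (hX : X.Nonempty) (hY : Y.Nonempty)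
    (hs : ∀ J ∈ Y, 0 < s J ∧ s J ≤ g m) :
    ∀ J ∈ X, charge m g r s Y J ≤ charge m g r s X J := by
  have hpos : ∀ q : ℕ → ℝ, 0 < q 1 → (∀ i j, 1 ≤ i → i < j → j ≤ m → q i < q j) →
      ∀ i, 1 ≤ i → i ≤ m → 0 < q i := by
    intro q hq1 hq i hi him
    rcases hi.eq_or_lt with rfl | h
    · exact hq1
    · exact hq1.trans (hq 1 i le_rfl h him)
  have hgpos := hpos g hg1 hg
  have hrpos := hpos r hr1 hr
  intro J hJ
  rcases (zdia_mono hm hgpos hrpos hXY hX hs).eq_or_lt with h | h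
  · exact charge_le_of_zdia_eq hm hgpos hrpos hXY hX hs hJ h.symm
  · exact charge_le_of_zdia_lt hm hgpos hrpos hXY hX hs hJ h

end BSHM
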